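/- For every integer t with 1 ≤ t ≤ 7 there exists a linear code over the field with 64 elements of length 81 and dimension 4t, with minimum distance at least 81 − 9t − 12 = 69 − 9t, such that every coordinate has two disjoint recovering sets of size 2. In particular (t = 7), there exists a linear code over the field with 64 elements of length 81 and dimension 28, with minimum distance at least 6, in which every coordinate has two disjoint recovering sets of size 2. -/

import Mathlib

/-!
The code is a generalized concatenated code. Its coordinates form `9` blocks, each block being a
`3 × 3` grid with coordinates `(x i, y j)`, and its words are
`a(s) x y + b(s) x + c(s) (x + y) + d(s)` with `a, b, c, d` ranging over Reed-Solomon codes of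
length `9`. On a line of the grid such a word is an affine function, so any two of its three values
determine the third; the row and the column through a point give its two recovering sets. If
`a(s) ≠ 0`, then the block at `s` has weight at least `4`; if `a = 0` and `b(s) ≠ 0`, at least `6`;
if `a = b = 0` and `c(s) ≠ 0`, at least `8`, because the nine sums `x i + y j` are distinct; and if
only `d` is left, the weight is `9`. Multiplying by the distance `10 - k` of a Reed-Solomon code of
dimension `k`, one can distribute `4 t` dimensions over `a, b, c, d` and keep distance `69 - 9 t`.
-/

open Function Polynomial

namespace LocallyRecoverableCode

variable {F : Type*} [Field F] {ι κ σ τ : Type*}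

section RecoveringSets

/-- `I` is a recovering set for the coordinate `i` of the linear code `C`: codewords that agree on
`I` agree at `i`. That `i` does not lie in `I` is not part of the definition. -/
def IsRecoveringSet (C : Submodule F (ι → F)) (I : Finset ι) (i : ι) : Prop :=
  ∀ x ∈ C, ∀ y ∈ C, (∀ j ∈ I, x j = y j) → x i = y i

/-- The coordinate `i` of the linear code `C` has two disjoint recovering sets of size at most
`r`. -/
def HasTwoRecoveringSets (C : Submodule F (ι → F)) (r : ℕ) (i : ι) : Prop :=
  ∃ I₁ I₂ : Finset ι, i ∉ I₁ ∧ i ∉ I₂ ∧ Disjoint I₁ I₂ ∧ I₁.card ≤ r ∧ I₂.card ≤ r ∧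
    IsRecoveringSet C I₁ i ∧ IsRecoveringSet C I₂ i

/-- `C` is a linear code of dimension `k` and minimum distance at least `d` in which every
coordinate has two disjoint recovering sets of size at most `r`. -/
def IsLRC (C : Submodule F (ι → F)) (k d r : ℕ) : Prop :=
  Module.finrank F C = k ∧
    (∀ x : ι → F, x ∈ C → x ≠ 0 → d ≤ Nat.card {i : ι // x i ≠ 0}) ∧
    ∀ i : ι, HasTwoRecoveringSets C r i

lemma exists_notMem_card_eq [Fintype ι] {n : ℕ} (hn : n < Fintype.card ι) (i : ι) :
    ∃ I : Finset ι, i ∉ I ∧ I.card = n := by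
  classical
  have hle : n ≤ (Finset.univ.erase i).card := by
    rw [Finset.card_erase_of_mem (Finset.mem_univ i), Finset.card_univ]
    lia
  obtain ⟨I, hI, hcard⟩ := Finset.exists_subset_card_eq hle
  exact ⟨I, fun hi ↦ Finset.notMem_erase i _ (hI hi), hcard⟩

variable {C : Submodule F (ι → F)} {D : Submodule F (κ → F)} {k d r : ℕ}

lemma IsRecoveringSet.map {I : Finset κ} {i : κ} (hI : IsRecoveringSet D I i) (f : κ ↪ ι)
    (hf : ∀ x ∈ C, x ∘ f ∈ D) : IsRecoveringSet C (I.map f) (f i) :=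
  fun x hx y hy hxy ↦ hI _ (hf x hx) _ (hf y hy) fun j hj ↦
    hxy (f j) (Finset.mem_map_of_mem f hj)

lemma HasTwoRecoveringSets.map {i : κ} (hD : HasTwoRecoveringSets D r i) (f : κ ↪ ι)
    (hf : ∀ x ∈ C, x ∘ f ∈ D) : HasTwoRecoveringSets C r (f i) := by
  obtain ⟨I₁, I₂, hi₁, hi₂, hdisj, hr₁, hr₂, hI₁, hI₂⟩ := hD
  exact ⟨I₁.map f, I₂.map f, by simpa using hi₁, by simpa using hi₂,
    (Finset.disjoint_map f).2 hdisj, by simpa using hr₁, by simpa using hr₂,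
    hI₁.map f hf, hI₂.map f hf⟩

lemma IsLRC.reindex (hC : IsLRC C k d r) (e : ι ≃ κ) :
    IsLRC (C.map (LinearEquiv.funCongrLeft F F e.symm : (ι → F) →ₗ[F] (κ → F))) k d r := by
  obtain ⟨hk, hd, hr⟩ := hC
  have hcomp : ∀ x ∈ C.map (LinearEquiv.funCongrLeft F F e.symm : (ι → F) →ₗ[F] (κ → F)),
      x ∘ e ∈ C := by
    rintro _ ⟨x, hx, rfl⟩
    convert SetLike.mem_coe.1 hx
    ext i
    simp [LinearEquiv.funCongrLeft_apply, LinearMap.funLeft_apply]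
  refine ⟨(LinearEquiv.finrank_map_eq _ C).trans hk, fun x hx hx0 ↦ ?_, fun j ↦ ?_⟩
  · have hxe : x ∘ e ≠ 0 := fun h ↦ hx0 (e.surjective.injective_comp_right h)
    exact (hd _ (hcomp x hx) hxe).trans_eq
      (Nat.card_congr (e.subtypeEquiv fun _ ↦ Iff.rfl))
  · simpa using (hr (e.symm j)).map e.toEmbedding hcomp

end RecoveringSets

lemma hammingNorm_mul_le_hammingNorm_prod [Fintype σ] [Fintype ι] {M N : Type*} [Zero M] [Zero N]
    [DecidableEq M] [DecidableEq N] {c : σ → M} {z : σ × ι → N} {w : ℕ}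
    (hw : ∀ s, c s ≠ 0 → w ≤ hammingNorm fun i ↦ z (s, i)) :
    hammingNorm c * w ≤ hammingNorm z := by
  have hsum : hammingNorm z = ∑ s, hammingNorm fun i ↦ z (s, i) := by
    simp only [hammingNorm, Finset.card_filter, Fintype.sum_prod_type]
  calc hammingNorm c * w = ∑ s with c s ≠ 0, w := by simp [hammingNorm]
    _ ≤ ∑ s with c s ≠ 0, hammingNorm fun i ↦ z (s, i) :=
      Finset.sum_le_sum fun s hs ↦ hw s (Finset.mem_filter.1 hs).2
    _ ≤ hammingNorm z := hsum ▸ Finset.sum_le_univ_sum_of_nonneg fun _ ↦ Nat.zero_le _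

section ReedSolomon

variable {e : σ → F} {k : ℕ}

/-- The Reed-Solomon code: the values at the points `e s` of the polynomials of degree less than
`k`. -/
noncomputable def reedSolomonCode (e : σ → F) (k : ℕ) : Submodule F (σ → F) :=
  (degreeLT F k).map (LinearMap.pi fun s ↦ leval (e s))

lemma mem_reedSolomonCode {z : σ → F} :
    z ∈ reedSolomonCode e k ↔ ∃ p ∈ degreeLT F k, (fun s ↦ p.eval (e s)) = z :=
  Iff.rfl

lemma affine_mem_reedSolomonCode (e : σ → F) (a b : F) :
    (fun s ↦ a * e s + b) ∈ reedSolomonCode e 2 :=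
  mem_reedSolomonCode.2 ⟨C a * X + C b, mem_degreeLT.2 degree_linear_lt, by simp⟩

lemma isRecoveringSet_reedSolomonCode (he : Injective e) {I : Finset σ} (hI : k ≤ I.card) (s : σ) :
    IsRecoveringSet (reedSolomonCode e k) I s := by
  rintro _ ⟨p, hp, rfl⟩ _ ⟨q, hq, rfl⟩ hpq
  have hkI : (k : WithBot ℕ) ≤ I.card := by exact_mod_cast hI
  rw [eq_of_degrees_lt_of_eval_index_eq I he.injOn ((mem_degreeLT.1 hp).trans_le hkI)
    ((mem_degreeLT.1 hq).trans_le hkI) hpq]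

variable [Fintype σ]

lemma card_lt_add_hammingNorm_eval [DecidableEq F] (he : Injective e) {p : F[X]}
    (hp : p ∈ degreeLT F k) (hp0 : p ≠ 0) :
    Fintype.card σ < k + hammingNorm fun s ↦ p.eval (e s) := by
  have hroots : (Finset.univ.filter fun s ↦ p.eval (e s) = 0).card < k := by
    contrapose! hp0
    refine eq_zero_of_degree_lt_of_eval_index_eq_zero _ he.injOn
      ((mem_degreeLT.1 hp).trans_le (Nat.cast_le.2 hp0)) fun s hs ↦ (Finset.mem_filter.1 hs).2
  have hsplit := Finset.card_filter_add_card_filter_not (s := Finset.univ)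
    fun s ↦ p.eval (e s) = 0
  rw [Finset.card_univ] at hsplit
  unfold hammingNorm
  lia

lemma card_lt_add_hammingNorm_of_mem_reedSolomonCode [DecidableEq F] (he : Injective e) {z : σ → F}
    (hz : z ∈ reedSolomonCode e k) (hz0 : z ≠ 0) : Fintype.card σ < k + hammingNorm z := by
  obtain ⟨p, hp, rfl⟩ := mem_reedSolomonCode.1 hz
  refine card_lt_add_hammingNorm_eval he hp ?_
  rintro rfl
  exact hz0 (by ext; simp)

lemma card_sub_one_le_hammingNorm_affine [DecidableEq F] (he : Injective e) {a : F} (ha : a ≠ 0)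
    (b : F) : Fintype.card σ - 1 ≤ hammingNorm fun s ↦ a * e s + b := by
  have hp0 : C a * X + C b ≠ 0 := fun h ↦ by simpa [h] using degree_linear (b := b) ha
  have := card_lt_add_hammingNorm_eval he (k := 2) (mem_degreeLT.2 degree_linear_lt) hp0
  simp only [eval_add, eval_mul, eval_C, eval_X] at this
  lia

lemma finrank_reedSolomonCode (he : Injective e) (hk : k ≤ Fintype.card σ) :
    Module.finrank F (reedSolomonCode e k) = k := by
  classical
  let eval : degreeLT F k →ₗ[F] σ → F := (LinearMap.pi fun s ↦ leval (e s)).domRestrict _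
  have heval : Injective eval := by
    refine (injective_iff_map_eq_zero eval).2 fun p hp ↦ ?_
    by_contra hp0
    have hlt := card_lt_add_hammingNorm_eval he p.2 (Submodule.coe_eq_zero.not.2 hp0)
    have hzero : (hammingNorm fun s ↦ (p : F[X]).eval (e s)) = 0 := hammingNorm_eq_zero.2 hp
    lia
  have hrange : reedSolomonCode e k = LinearMap.range eval :=
    (LinearMap.range_domRestrict _ _).symm
  rw [hrange, LinearMap.finrank_range_of_inj heval,
    Module.finrank_eq_card_basis (degreeLT.basis F k), Fintype.card_fin]

end ReedSolomon

section Concatenation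

variable [Fintype τ]

/-- The encoder of the generalized concatenation of the outer codes `A l` with the inner basis
words `v l`: the block at `s` of the codeword is the combination of the `v l` with coefficients
`c l s`. -/
def concatenationEncoder (A : τ → Submodule F (σ → F)) (v : τ → ι → F) :
    (∀ l, A l) →ₗ[F] (σ × ι → F) where
  toFun c p := ∑ l, (c l : σ → F) p.1 * v l p.2
  map_add' c c' := by
    ext p
    simp [add_mul, Finset.sum_add_distrib]
  map_smul' a c := by
    ext p
    simp [mul_assoc, Finset.mul_sum]

/-- The generalized concatenated code (Blokh-Zyablov) with outer codes `A l` and inner basis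
words `v l`. -/
def generalizedConcatenation (A : τ → Submodule F (σ → F)) (v : τ → ι → F) :
    Submodule F (σ × ι → F) :=
  LinearMap.range (concatenationEncoder A v)

/-- A combination of the `v m` whose first nonzero coefficient is that of `v l` has weight at least
`w l`. In terms of the nested inner codes `B l`, spanned by the `v m` with `l ≤ m`, this bounds the
weight on the complement of `B (l + 1)` in `B l`. -/
def HasLeadingWeights [LinearOrder τ] [Fintype ι] [DecidableEq F] (v : τ → ι → F) (w : τ → ℕ) :
    Prop :=
  ∀ (a : τ → F) (l : τ), a l ≠ 0 → (∀ m < l, a m = 0) →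
    w l ≤ hammingNorm fun i ↦ ∑ m, a m * v m i

variable {A : τ → Submodule F (σ → F)} {v : τ → ι → F} {w : τ → ℕ} {d r : ℕ}

lemma block_mem_span_of_mem_generalizedConcatenation {z : σ × ι → F}
    (hz : z ∈ generalizedConcatenation A v) (s : σ) :
    (fun i ↦ z (s, i)) ∈ Submodule.span F (Set.range v) := by
  obtain ⟨c, rfl⟩ := hz
  refine (Submodule.mem_span_range_iff_exists_fun F).2 ⟨fun l ↦ (c l : σ → F) s, ?_⟩
  ext i
  simp [concatenationEncoder]

variable [LinearOrder τ] [Fintype ι] [Fintype σ]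

lemma le_hammingNorm_concatenationEncoder [DecidableEq F] (hv : HasLeadingWeights v w)
    (hA : ∀ l, ∀ c ∈ A l, c ≠ 0 → d ≤ hammingNorm c * w l) {c : ∀ l, A l} (hc : c ≠ 0) :
    d ≤ hammingNorm (concatenationEncoder A v c) := by
  obtain ⟨l, hl, hmin⟩ := wellFounded_lt.has_min {l | c l ≠ 0} (ne_iff.1 hc)
  have hzero : ∀ m < l, c m = 0 := fun m hm ↦ by
    by_contra h
    exact hmin m h hm
  calc d ≤ hammingNorm (c l : σ → F) * w l := hA l _ (c l).2 (Submodule.coe_eq_zero.not.2 hl)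
    _ ≤ hammingNorm (concatenationEncoder A v c) :=
      hammingNorm_mul_le_hammingNorm_prod fun s hs ↦
        hv (fun m ↦ (c m : σ → F) s) l hs fun m hm ↦ by simp [hzero m hm]

theorem isLRC_generalizedConcatenation [DecidableEq F] (hd : 0 < d) (hv : HasLeadingWeights v w)
    (hA : ∀ l, ∀ c ∈ A l, c ≠ 0 → d ≤ hammingNorm c * w l)
    (hr : ∀ i, HasTwoRecoveringSets (Submodule.span F (Set.range v)) r i) :
    IsLRC (generalizedConcatenation A v) (∑ l, Module.finrank F (A l)) d r := by
  refine ⟨?_, ?_, fun ⟨s, i⟩ ↦ (hr i).map (Embedding.sectR s ι) fun z hz ↦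
    block_mem_span_of_mem_generalizedConcatenation hz s⟩
  · have hinj : Injective (concatenationEncoder A v) := by
      refine (injective_iff_map_eq_zero _).2 fun c hc ↦ ?_
      by_contra hc0
      have hle := le_hammingNorm_concatenationEncoder hv hA hc0
      rw [hc, hammingNorm_zero] at hle
      lia
    rw [generalizedConcatenation, LinearMap.finrank_range_of_inj hinj, Module.finrank_pi_fintype]
  · rintro _ ⟨c, rfl⟩ hc
    have hc0 : c ≠ 0 := by
      rintro rfl
      exact hc (map_zero _)
    rw [Nat.card_eq_fintype_card, Fintype.card_subtype]
    exact le_hammingNorm_concatenationEncoder hv hA hc0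

end Concatenation

section Grid

/-- The words `x y`, `x`, `x + y`, `1` on the grid of points `(x i, y j)`, the basis of the inner
code. They are ordered so that successive leading words force larger and larger weights; in
particular `x + y`, which takes distinct values at the points of the grid, takes the place of
`y`. -/
def gridBasis (x : ι → F) (y : κ → F) : Fin 4 → ι × κ → F :=
  ![fun p ↦ x p.1 * y p.2, fun p ↦ x p.1, fun p ↦ x p.1 + y p.2, 1]

variable {x : ι → F} {y : κ → F}

lemma sum_mul_gridBasis (a : Fin 4 → F) (p : ι × κ) :
    ∑ l, a l * gridBasis x y l p =
      a 0 * (x p.1 * y p.2) + a 1 * x p.1 + a 2 * (x p.1 + y p.2) + a 3 := by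
  rw [Fin.sum_univ_four]
  simp [gridBasis]

lemma mem_span_gridBasis {z : ι × κ → F} :
    z ∈ Submodule.span F (Set.range (gridBasis x y)) ↔
      ∃ a : Fin 4 → F, ∀ p, z p =
        a 0 * (x p.1 * y p.2) + a 1 * x p.1 + a 2 * (x p.1 + y p.2) + a 3 := by
  simp [Submodule.mem_span_range_iff_exists_fun, ← sum_mul_gridBasis, funext_iff, eq_comm]

lemma row_mem_reedSolomonCode {z : ι × κ → F}
    (hz : z ∈ Submodule.span F (Set.range (gridBasis x y))) (i : ι) :
    (fun j ↦ z (i, j)) ∈ reedSolomonCode y 2 := by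
  obtain ⟨a, ha⟩ := mem_span_gridBasis.1 hz
  convert affine_mem_reedSolomonCode y (a 0 * x i + a 2) ((a 1 + a 2) * x i + a 3) using 2
  rw [ha]
  ring

lemma column_mem_reedSolomonCode {z : ι × κ → F}
    (hz : z ∈ Submodule.span F (Set.range (gridBasis x y))) (j : κ) :
    (fun i ↦ z (i, j)) ∈ reedSolomonCode x 2 := by
  obtain ⟨a, ha⟩ := mem_span_gridBasis.1 hz
  convert affine_mem_reedSolomonCode x (a 0 * y j + a 1 + a 2) (a 2 * y j + a 3) using 2
  rw [ha]
  ring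

variable [Fintype ι] [Fintype κ]

lemma hasTwoRecoveringSets_span_gridBasis (hx : Injective x) (hy : Injective y)
    (hι : 2 < Fintype.card ι) (hκ : 2 < Fintype.card κ) (p : ι × κ) :
    HasTwoRecoveringSets (Submodule.span F (Set.range (gridBasis x y))) 2 p := by
  obtain ⟨i, j⟩ := p
  obtain ⟨I, hiI, hI⟩ := exists_notMem_card_eq hι i
  obtain ⟨J, hjJ, hJ⟩ := exists_notMem_card_eq hκ j
  have hrow := (isRecoveringSet_reedSolomonCode hy hJ.ge j).map (Embedding.sectR i κ)
    fun z (hz : z ∈ Submodule.span F (Set.range (gridBasis x y))) ↦ row_mem_reedSolomonCode hz i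
  have hcolumn := (isRecoveringSet_reedSolomonCode hx hI.ge i).map (Embedding.sectL ι j)
    fun z (hz : z ∈ Submodule.span F (Set.range (gridBasis x y))) ↦ column_mem_reedSolomonCode hz j
  refine ⟨_, _, ?_, ?_, ?_, ?_, ?_, hrow, hcolumn⟩
  · simpa using hjJ
  · simpa using hiI
  · simp only [Finset.disjoint_left, Finset.mem_map, not_exists, not_and]
    rintro _ ⟨j', -, rfl⟩ i' hi' h
    obtain rfl : i' = i := congrArg Prod.fst h
    exact hiI hi'
  · simp [hJ]
  · simp [hI]

variable [DecidableEq F]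

lemma le_hammingNorm_bilinear (hx : Injective x) (hy : Injective y) {a : F} (ha : a ≠ 0)
    (b c d : F) :
    (Fintype.card ι - 1) * (Fintype.card κ - 1) ≤
      hammingNorm fun p : ι × κ ↦ a * (x p.1 * y p.2) + b * x p.1 + c * y p.2 + d := by
  calc (Fintype.card ι - 1) * (Fintype.card κ - 1)
      ≤ hammingNorm (fun i ↦ a * x i + c) * (Fintype.card κ - 1) :=
        Nat.mul_le_mul_right _ (card_sub_one_le_hammingNorm_affine hx ha c)
    _ ≤ _ := hammingNorm_mul_le_hammingNorm_prod fun i hi ↦ by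
        convert card_sub_one_le_hammingNorm_affine hy hi (b * x i + d) using 3
        ring

lemma le_hammingNorm_affine_prod (hx : Injective x) (hy : Injective y) {b c : F}
    (hbc : b ≠ 0 ∨ c ≠ 0) (d : F) :
    min ((Fintype.card ι - 1) * Fintype.card κ) (Fintype.card ι * (Fintype.card κ - 1)) ≤
      hammingNorm fun p : ι × κ ↦ b * x p.1 + c * y p.2 + d := by
  rcases eq_or_ne c 0 with rfl | hc
  · have hb : b ≠ 0 := hbc.resolve_right (not_not.2 rfl)
    calc _ ≤ (Fintype.card ι - 1) * Fintype.card κ := min_le_left _ _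
      _ ≤ hammingNorm (fun i ↦ b * x i + d) * Fintype.card κ :=
        Nat.mul_le_mul_right _ (card_sub_one_le_hammingNorm_affine hx hb d)
      _ ≤ _ := hammingNorm_mul_le_hammingNorm_prod fun i hi ↦ by simp [hammingNorm, hi]
  · calc _ ≤ Fintype.card ι * (Fintype.card κ - 1) := min_le_right _ _
      _ = hammingNorm (fun _ : ι ↦ (1 : F)) * (Fintype.card κ - 1) := by simp [hammingNorm]
      _ ≤ _ := hammingNorm_mul_le_hammingNorm_prod fun i _ ↦ by
        convert card_sub_one_le_hammingNorm_affine hy hc (b * x i + d) using 3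
        ring

lemma hasLeadingWeights_gridBasis (hx : Injective x) (hy : Injective y)
    (hxy : Injective fun p : ι × κ ↦ x p.1 + y p.2) :
    HasLeadingWeights (gridBasis x y)
      ![(Fintype.card ι - 1) * (Fintype.card κ - 1),
        min ((Fintype.card ι - 1) * Fintype.card κ) (Fintype.card ι * (Fintype.card κ - 1)),
        Fintype.card ι * Fintype.card κ - 1,
        Fintype.card ι * Fintype.card κ] := by
  intro a l hl hlt
  simp only [sum_mul_gridBasis]
  match l with
  | 0 =>
    refine (le_hammingNorm_bilinear hx hy hl (a 1 + a 2) (a 2) (a 3)).trans_eq ?_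
    congr! 2
    ring
  | 1 =>
    have h0 : a 0 = 0 := hlt 0 (by decide)
    have hbc : a 1 + a 2 ≠ 0 ∨ a 2 ≠ 0 := by
      by_contra! h
      exact hl (by simpa [h.2] using h.1)
    refine (le_hammingNorm_affine_prod hx hy hbc (a 3)).trans_eq ?_
    congr! 2
    rw [h0]
    ring
  | 2 =>
    have h0 : a 0 = 0 := hlt 0 (by decide)
    have h1 : a 1 = 0 := hlt 1 (by decide)
    simpa [h0, h1] using card_sub_one_le_hammingNorm_affine hxy hl (a 3)
  | 3 =>
    have h0 : a 0 = 0 := hlt 0 (by decide)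
    have h1 : a 1 = 0 := hlt 1 (by decide)
    have h2 : a 2 = 0 := hlt 2 (by decide)
    simp [h0, h1, h2, hl, hammingNorm]

end Grid

lemma injective_left_of_injective_add {G : Type*} [Add G] [Nonempty κ] {x : ι → G} {y : κ → G}
    (hxy : Injective fun p : ι × κ ↦ x p.1 + y p.2) : Injective x := fun i i' h ↦
  have ⟨j⟩ := ‹Nonempty κ›
  congrArg Prod.fst (hxy (a₁ := (i, j)) (a₂ := (i', j)) (congrArg (· + y j) h))

lemma injective_right_of_injective_add {G : Type*} [Add G] [Nonempty ι] {x : ι → G} {y : κ → G}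
    (hxy : Injective fun p : ι × κ ↦ x p.1 + y p.2) : Injective y := fun j j' h ↦
  have ⟨i⟩ := ‹Nonempty ι›
  congrArg Prod.snd (hxy (a₁ := (i, j)) (a₂ := (i, j')) (congrArg (x i + ·) h))

lemma injective_add_of_prod_equiv {G V W : Type*} [AddZeroClass G] [AddZeroClass V]
    [AddZeroClass W] (e : V × W ≃+ G) {x : ι → V} {y : κ → W} (hx : Injective x)
    (hy : Injective y) : Injective fun p : ι × κ ↦ e (x p.1, 0) + e (0, y p.2) := by
  convert e.injective.comp (hx.prodMap hy) using 2
  simp [← map_add, Prod.map]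

lemma exists_injective_add_galoisField :
    ∃ x y : Fin 3 → GaloisField 2 6, Injective fun p : Fin 3 × Fin 3 ↦ x p.1 + y p.2 := by
  have hrank : Module.finrank (ZMod 2) ((Fin 3 → ZMod 2) × (Fin 3 → ZMod 2)) =
      Module.finrank (ZMod 2) (GaloisField 2 6) := by
    rw [GaloisField.finrank 2 (by norm_num)]
    simp
  let e := LinearEquiv.ofFinrankEq _ (GaloisField 2 6) hrank
  obtain ⟨x⟩ : Nonempty (Fin 3 ↪ (Fin 3 → ZMod 2)) :=
    Embedding.nonempty_of_card_le (by simp)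
  exact ⟨fun i ↦ e (x i, 0), fun j ↦ e (0, x j),
    injective_add_of_prod_equiv e.toAddEquiv x.injective x.injective⟩

/-- Here `δ` stands for the weight of a nonzero word of the outer Reed-Solomon code of length `9`
and dimension `k l`, and `4, 6, 8, 9` are the leading weights of the inner basis on a `3 × 3`
grid. -/
lemma exists_outer_dimensions {t : ℕ} (ht : t ≤ 7) :
    ∃ k : Fin 4 → ℕ, ∑ l, k l = 4 * t ∧ (∀ l, k l ≤ 9) ∧
      ∀ l, ∀ δ ≤ 9, 9 < k l + δ → 69 - 9 * t ≤ δ * ![4, 6, 8, 9] l := by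
  interval_cases t
  · exact ⟨![0, 0, 0, 0], by decide⟩
  · exact ⟨![0, 0, 1, 3], by decide⟩
  · exact ⟨![0, 1, 3, 4], by decide⟩
  · exact ⟨![0, 3, 4, 5], by decide⟩
  · exact ⟨![1, 4, 5, 6], by decide⟩
  · exact ⟨![2, 5, 6, 7], by decide⟩
  · exact ⟨![6, 6, 6, 6], by decide⟩
  · exact ⟨![7, 7, 7, 7], by decide⟩

end LocallyRecoverableCode

open LocallyRecoverableCode

theorem exists_LRC_F64_length81_two_recovery_sets_general {F : Type*} [Field F] {x y : Fin 3 → F}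
    (hxy : Injective fun p : Fin 3 × Fin 3 ↦ x p.1 + y p.2) {t : ℕ} (ht : t ≤ 7) :
    ∃ C : Submodule F (Fin 81 → F), IsLRC C (4 * t) (69 - 9 * t) 2 := by
  classical
  have hx : Injective x := injective_left_of_injective_add hxy
  have hy : Injective y := injective_right_of_injective_add hxy
  obtain ⟨k, hsum, hk, hdist⟩ := exists_outer_dimensions ht
  have hw : HasLeadingWeights (gridBasis x y) ![4, 6, 8, 9] := hasLeadingWeights_gridBasis hx hy hxy
  have hlrc := isLRC_generalizedConcatenation (d := 69 - 9 * t)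
    (A := fun l ↦ reedSolomonCode (fun p : Fin 3 × Fin 3 ↦ x p.1 + y p.2) (k l)) (by lia) hw
    (fun l c hc hc0 ↦ hdist l _ hammingNorm_le_card_fintype
      (card_lt_add_hammingNorm_of_mem_reedSolomonCode hxy hc hc0))
    (hasTwoRecoveringSets_span_gridBasis hx hy (by simp) (by simp))
  simp only [finrank_reedSolomonCode hxy (hk _), hsum] at hlrc
  exact ⟨_, hlrc.reindex (Fintype.equivOfCardEq (by simp))⟩

/-- Theorem 6.1 applied to `y² + y = x³` over `F_64`: for each `1 ≤ t ≤ 7` there is a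
linear code over `F_64` of length 81, dimension `4t`, minimum distance at least
`69 - 9t`, in which every coordinate has two disjoint recovering sets of size 2. -/
theorem exists_LRC_F64_length81_two_recovery_sets :
    ∀ t : ℕ, 1 ≤ t → t ≤ 7 →
      ∃ C : Submodule (GaloisField 2 6) (Fin 81 → GaloisField 2 6),
        Module.finrank (GaloisField 2 6) C = 4 * t ∧
        (∀ x : Fin 81 → GaloisField 2 6, x ∈ C → x ≠ 0 →
          69 - 9 * t ≤ Nat.card {i : Fin 81 // x i ≠ 0}) ∧
        (∀ i : Fin 81, ∃ I₁ I₂ : Finset (Fin 81),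
          i ∉ I₁ ∧ i ∉ I₂ ∧ Disjoint I₁ I₂ ∧ I₁.card ≤ 2 ∧ I₂.card ≤ 2 ∧
          (∀ x ∈ C, ∀ y ∈ C, (∀ j ∈ I₁, x j = y j) → x i = y i) ∧
          (∀ x ∈ C, ∀ y ∈ C, (∀ j ∈ I₂, x j = y j) → x i = y i)) := by
  obtain ⟨x, y, hxy⟩ := exists_injective_add_galoisField
  exact fun t _ ht ↦ exists_LRC_F64_length81_two_recovery_sets_general hxy ht
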